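/- For every integer a ≥ 2, g(a) ≤ a + 0.5 ln a + 1.65, where g is the sequence defined by g(1) = e and g(a+1) = g(a) + 1 + 1/(2 g(a)) + (3/5)/g(a)². -/

import Mathlib

/-!
Since each step of the recursion adds at least `1` and `g 1 = e > 2.7`, one has `g a ≥ a + 1.7`.
With this lower bound the increment satisfies
`1 / (2 g) + 0.6 / g ^ 2 ≤ 1 / (2 a + 1) ≤ 0.5 * log (1 + 1 / a)`, the last inequality being the
classical `log (1 + x) ≥ 2 x / (x + 2)`. Hence `g a - a - 0.5 * log a` is non-increasing for
`a ≥ 1`, and it remains to check numerically that it is at most `1.65` at `a = 2`.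
-/


/-- The Bregman-like sequence: `g 1 = e`, `g (a+1) = g a + 1 + 1/(2 g a) + 0.6/(g a)^2`. -/
noncomputable def bregmanG : ℕ → ℝ
  | 0 => Real.exp 1
  | 1 => Real.exp 1
  | (a + 2) => bregmanG (a + 1) + 1 + 1 / (2 * bregmanG (a + 1))
      + 0.6 / (bregmanG (a + 1)) ^ 2

theorem bregmanG_succ {a : ℕ} (ha : 1 ≤ a) :
    bregmanG (a + 1) = bregmanG a + 1 + 1 / (2 * bregmanG a) + 0.6 / (bregmanG a) ^ 2 := by
  obtain ⟨b, rfl⟩ := Nat.exists_eq_add_of_le' ha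
  rw [bregmanG]

theorem le_bregmanG {a : ℕ} (ha : 1 ≤ a) : (a : ℝ) + 1.7 ≤ bregmanG a := by
  induction a, ha using Nat.le_induction with
  | base =>
    have := Real.exp_one_gt_d9
    rw [bregmanG]
    norm_num at this ⊢
    linarith
  | succ n hn ih =>
    have hpos : 0 < bregmanG n := lt_of_lt_of_le (by positivity) ih
    rw [bregmanG_succ hn]
    have h1 : 0 ≤ 1 / (2 * bregmanG n) := by positivity
    have h2 : 0 ≤ 0.6 / (bregmanG n) ^ 2 := by positivity
    push_cast
    linarith

/-- The bound amounts to `(g + 1.2) (x + 1 / 2) ≤ g ^ 2`. At `g = x + c` the right side exceeds the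
left by `(c - 1.7) x + c ^ 2 - c / 2 - 0.6`, so `1.7` is the least shift that works for all `x`. -/
theorem increment_le {x g : ℝ} (hx : 0 ≤ x) (hg : x + 1.7 ≤ g) :
    1 / (2 * g) + 0.6 / g ^ 2 ≤ 1 / (2 * x + 1) := by
  have hpos : 0 < g := by linarith
  have : 1 / (2 * g) + 0.6 / g ^ 2 = (g + 1.2) / (2 * g ^ 2) := by
    field_simp
    ring
  rw [this, div_le_div_iff₀ (by positivity) (by positivity)]
  nlinarith [mul_nonneg hpos.le (sub_nonneg.2 hg)]

theorem one_div_le_log_succ_sub {a : ℕ} (ha : 1 ≤ a) :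
    1 / (2 * (a : ℝ) + 1) ≤ 0.5 * (Real.log ((a : ℝ) + 1) - Real.log a) := by
  have hpos : (0 : ℝ) < a := by exact_mod_cast ha
  have h := Real.le_log_one_add_of_nonneg (x := 1 / (a : ℝ)) (by positivity)
  have e1 : 2 * (1 / (a : ℝ)) / (1 / (a : ℝ) + 2) = 2 * (1 / (2 * (a : ℝ) + 1)) := by
    field_simp
    ring
  have e2 : 1 + 1 / (a : ℝ) = ((a : ℝ) + 1) / a := by field_simp
  rw [e1, e2, Real.log_div (by positivity) (by positivity)] at h
  linarith

theorem bregmanG_two_le : bregmanG 2 ≤ 2 + 0.5 * Real.log 2 + 1.65 := by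
  have hlo : (2.718 : ℝ) ≤ Real.exp 1 := by linarith [Real.exp_one_gt_d9]
  have hhi := Real.exp_one_lt_d9
  have hlog := Real.log_two_gt_d9
  have h1 : 1 / (2 * Real.exp 1) ≤ 1 / (2 * 2.718) := by gcongr
  have h2 : 0.6 / Real.exp 1 ^ 2 ≤ 0.6 / 2.718 ^ 2 := by gcongr
  rw [bregmanG_succ le_rfl, bregmanG]
  norm_num at *
  linarith

/-- For every integer `a ≥ 2`, `g(a) ≤ a + 0.5 ln a + 1.65`. -/
theorem bregmanG_le (a : ℕ) (ha : 2 ≤ a) :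
    bregmanG a ≤ (a : ℝ) + 0.5 * Real.log a + 1.65 := by
  induction a, ha using Nat.le_induction with
  | base => exact_mod_cast bregmanG_two_le
  | succ n hn ih =>
    have hn1 : 1 ≤ n := by omega
    have h1 := increment_le (Nat.cast_nonneg n) (le_bregmanG hn1)
    have h2 := one_div_le_log_succ_sub hn1
    rw [bregmanG_succ hn1]
    push_cast
    linarith
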